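/- Fix an integer r ≥ 1. For an integer l and an integer n ≥ 1 let d(l,n) ∈ ℕ^r be the dimension vector of E_l[n], i.e. for each v ∈ {1,…,r}, d(l,n)_v = #{s : 0 ≤ s ≤ n-1 and l + s ≡ v (mod r)}. For a finite multiset S of pairs (l,n) with 1 ≤ l ≤ r and n ≥ 1, let X_S = ∏_{(l,n) ∈ S} X(l,n) ∈ ℚ(x_1,…,x_r) and d(S) = Σ_{(l,n) ∈ S} d(l,n) ∈ ℕ^r (so X_S = X_{T} for the module T = ⊕_{(l,n)∈S} E_l[n] and d(S) is its dimension vector). Write e ≺ f for e, f ∈ ℕ^r if e_v ≤ f_v for all v and e ≠ f. Then for any two finite multisets S, T of such pairs with d(S) = d(T), there exist finitely many multisets R_1,…,R_N of such pairs with d(R_t) ≺ d(T) for all t, and integers a_1,…,a_N, such that X_S = X_T + Σ_{t=1}^{N} a_t · X_{R_t}. -/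

import Mathlib

/-- The ambient field `ℚ(x_1, …, x_r)`, realized as the fraction field of the
polynomial ring over `ℚ` in variables indexed by `ZMod r` (so indices are
automatically read modulo `r`). -/
noncomputable abbrev CyclicField (r : ℕ) : Type :=
  FractionRing (MvPolynomial (ZMod r) ℚ)

/-- The variable `x_i` for `i : ℤ`, with `x_{i+r} = x_i`. -/
noncomputable def xv (r : ℕ) (i : ℤ) : CyclicField r :=
  algebraMap (MvPolynomial (ZMod r) ℚ) (CyclicField r) (MvPolynomial.X (i : ZMod r))

/-- The generalized cluster variable `X(l, n)` (the image of the indecomposable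
nilpotent representation `E_l[n]` under the Caldero–Chapoton map):
`X(l,0) = 1` and, for `n ≥ 1`,
`X(l,n) = x_{l+n}/x_l + Σ_{k=1}^{n-1} (x_{l+n}·x_{l+r-1})/(x_{l+k-1}·x_{l+k}) + x_{l+r-1}/x_{l+n-1}`. -/
noncomputable def Xgcv (r : ℕ) (l : ℤ) : ℕ → CyclicField r
  | 0 => 1
  | n + 1 =>
      xv r (l + n + 1) / xv r l
        + ∑ k ∈ Finset.Icc 1 n,
            (xv r (l + n + 1) * xv r (l + r - 1)) / (xv r (l + k - 1) * xv r (l + k))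
        + xv r (l + r - 1) / xv r (l + n)

/-- The dimension vector of `E_l[n]`: its coordinate at the vertex `v : ZMod r` is
`#{s : 0 ≤ s ≤ n-1, l + s ≡ v (mod r)}`. -/
def dimVec (r : ℕ) (l : ℤ) (n : ℕ) : ZMod r → ℕ :=
  fun v => ((Finset.range n).filter fun (s : ℕ) => ((l + (s : ℤ)) : ZMod r) = v).card

/-- The generalized cluster variable of the direct sum `⊕_{(l,n) ∈ S} E_l[n]`
attached to a finite multiset `S` of pairs `(l, n)`. -/
noncomputable def XMul (r : ℕ) (S : Multiset (ℤ × ℕ)) : CyclicField r :=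
  (S.map fun p => Xgcv r p.1 p.2).prod

/-- The dimension vector of the direct sum `⊕_{(l,n) ∈ S} E_l[n]`. -/
def dimMul (r : ℕ) (S : Multiset (ℤ × ℕ)) : ZMod r → ℕ :=
  fun v => (S.map fun p => dimVec r p.1 p.2 v).sum

/-- A multiset of pairs `(l, n)` is admissible if `1 ≤ l ≤ r` and `n ≥ 1` throughout. -/
def Admissible (r : ℕ) (S : Multiset (ℤ × ℕ)) : Prop :=
  ∀ p ∈ S, 1 ≤ p.1 ∧ p.1 ≤ (r : ℤ) ∧ 1 ≤ p.2

/-- The strict coordinatewise order `e ≺ f` on dimension vectors. -/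
def DimLT (r : ℕ) (e f : ZMod r → ℕ) : Prop :=
  (∀ v, e v ≤ f v) ∧ e ≠ f

/-!
Write `x_i` for the variables. Both `u_n = x_{l+n-1}` and
`u_n = x_{l+n-1} Σ_{k<n} 1/(x_{l+k-1} x_{l+k})` solve `u_{n+2} + u_n = c_n u_{n+1}` with
`c_n = (x_{l+n+1} + x_{l+n-1}) / x_{l+n} = X(l+n, 1)`, and `X(l, n)` is `x_{l-1}` times the second
solution at `n + 1`. Hence `X(l, n+2) = X(l, n+1) X(l+n+1, 1) - X(l, n)`, so each `X(l, n)` is an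
integer polynomial in the variables of the simple modules whose leading monomial has exponent
`d(l, n)` and coefficient one. Leading monomials multiply, so `X_S` and `X_T` have the same leading
monomial as soon as `d(S) = d(T)`. Their difference is then an integer combination of smaller
monomials, and each of these is the variable of a semisimple module.
-/

section LeadingTerm

variable {M : Type*} [AddCommMonoid M] [PartialOrder M]
variable {A : Type*} [CommRing A] (f : Multiplicative M →* A)

/-- The elements of degree `< d` for the filtration of `A` spanned by the monomials `f`, where
`f` is a family of monomials indexed by a partially ordered monoid `M` of exponents. -/
def spanLT (d : M) : Submodule ℤ A :=
  Submodule.span ℤ ((fun e => f (.ofAdd e)) '' Set.Iio d)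

/-- The elements of degree `≤ d` for the filtration of `A` spanned by the monomials `f`. -/
def spanLE (d : M) : Submodule ℤ A :=
  Submodule.span ℤ ((fun e => f (.ofAdd e)) '' Set.Iic d)

/-- The monomial of exponent `d` is the leading term of `a`, with coefficient one. The order on
exponents is only partial, so all the other terms are required to have exponent `< d`. -/
def HasLeadingTerm (d : M) (a : A) : Prop :=
  a - f (.ofAdd d) ∈ spanLT f d

variable {f} {d e : M} {a b : A}

lemma spanLT_le_spanLE : spanLT f d ≤ spanLE f d :=
  Submodule.span_mono (Set.image_mono Set.Iio_subset_Iic_self)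

lemma spanLE_le_spanLT (h : d < e) : spanLE f d ≤ spanLT f e :=
  Submodule.span_mono (Set.image_mono (Set.Iic_subset_Iio.2 h))

lemma map_ofAdd_mem_spanLE : f (.ofAdd d) ∈ spanLE f d :=
  Submodule.subset_span ⟨d, Set.self_mem_Iic, rfl⟩

lemma spanLT_mul_spanLE_le [IsOrderedCancelAddMonoid M] :
    spanLT f d * spanLE f e ≤ spanLT f (d + e) := by
  rw [spanLT, spanLE, Submodule.span_mul_span]
  refine Submodule.span_mono (Set.mul_subset_iff.2 ?_)
  rintro _ ⟨p, hp, rfl⟩ _ ⟨q, hq, rfl⟩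
  exact ⟨p + q, add_lt_add_of_lt_of_le hp hq, map_mul f (.ofAdd p) (.ofAdd q)⟩

namespace HasLeadingTerm

lemma map_ofAdd : HasLeadingTerm f d (f (.ofAdd d)) := by
  simp [HasLeadingTerm]

lemma one : HasLeadingTerm f 0 1 := by
  simpa using map_ofAdd (f := f) (d := 0)

lemma mem_spanLE (h : HasLeadingTerm f d a) : a ∈ spanLE f d := by
  simpa using add_mem (spanLT_le_spanLE h) map_ofAdd_mem_spanLE

lemma sub_mem_spanLT (ha : HasLeadingTerm f d a) (hb : HasLeadingTerm f d b) :
    a - b ∈ spanLT f d := by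
  simpa using sub_mem ha hb

lemma sub (ha : HasLeadingTerm f d a) (hb : b ∈ spanLT f d) :
    HasLeadingTerm f d (a - b) := by
  simpa only [HasLeadingTerm, sub_right_comm] using sub_mem ha hb

variable [IsOrderedCancelAddMonoid M]

lemma mul (ha : HasLeadingTerm f d a) (hb : HasLeadingTerm f e b) :
    HasLeadingTerm f (d + e) (a * b) := by
  have hab : (a - f (.ofAdd d)) * b ∈ spanLT f (d + e) :=
    spanLT_mul_spanLE_le (Submodule.mul_mem_mul ha hb.mem_spanLE)
  have hdb : (b - f (.ofAdd e)) * f (.ofAdd d) ∈ spanLT f (d + e) :=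
    add_comm e d ▸ spanLT_mul_spanLE_le (Submodule.mul_mem_mul hb map_ofAdd_mem_spanLE)
  rw [HasLeadingTerm, ofAdd_add, map_mul]
  convert add_mem hab hdb using 1
  ring

lemma multiset_prod {ι : Type*} {d : ι → M} {a : ι → A} {s : Multiset ι}
    (h : ∀ i ∈ s, HasLeadingTerm f (d i) (a i)) :
    HasLeadingTerm f (s.map d).sum (s.map a).prod := by
  induction s using Multiset.induction_on with
  | empty => simpa using one
  | cons i s ih =>
    rw [Multiset.forall_mem_cons] at h
    simpa using h.1.mul (ih h.2)

end HasLeadingTerm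

end LeadingTerm

section Monomial

variable {σ A : Type*} [Fintype σ] [CommMonoid A]

/-- The monomial `∏ v, y v ^ d v` in a finite family `y`, as a homomorphism in the exponent `d`. -/
def monomialHom (y : σ → A) : Multiplicative (σ → ℕ) →* A where
  toFun d := ∏ v, y v ^ d.toAdd v
  map_one' := by simp
  map_mul' d e := by simp [pow_add, Finset.prod_mul_distrib]

lemma monomialHom_ofAdd (y : σ → A) (d : σ → ℕ) :
    monomialHom y (.ofAdd d) = ∏ v, y v ^ d v := rfl

lemma monomialHom_single [DecidableEq σ] (y : σ → A) (v : σ) :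
    monomialHom y (.ofAdd (Pi.single v 1)) = y v := by
  simp [monomialHom_ofAdd, Pi.single_apply, pow_ite]

end Monomial

-- Reduction of order: `u n = x n` solves `u (n + 2) + u n = c n * u (n + 1)` with
-- `c n = (x (n + 2) + x n) / x (n + 1)`, and this is the recurrence for a second solution.
lemma mul_sum_inv_recurrence {K : Type*} [Field K] {x : ℕ → K} (hx : ∀ i, x i ≠ 0) (n : ℕ) :
    x (n + 2) * ∑ k ∈ Finset.range (n + 2), 1 / (x k * x (k + 1)) =
      (x (n + 1) * ∑ k ∈ Finset.range (n + 1), 1 / (x k * x (k + 1))) *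
          ((x (n + 2) + x n) / x (n + 1)) -
        x n * ∑ k ∈ Finset.range n, 1 / (x k * x (k + 1)) := by
  have hn := hx n
  have hn' := hx (n + 1)
  have hn'' := hx (n + 2)
  rw [Finset.sum_range_succ _ (n + 1), Finset.sum_range_succ _ n]
  field_simp
  ring

section ClusterVariable

variable {r : ℕ}

lemma xv_ne_zero (i : ℤ) : xv r i ≠ 0 := by
  simp [xv]

lemma xv_congr {i j : ℤ} (h : (i : ZMod r) = j) : xv r i = xv r j := by
  rw [xv, xv, h]

lemma Xgcv_congr {l m : ℤ} (h : (l : ZMod r) = m) (n : ℕ) : Xgcv r l n = Xgcv r m n := by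
  cases n <;> simp [Xgcv, xv, h]

lemma Xgcv_one (l : ℤ) : Xgcv r l 1 = (xv r (l + 1) + xv r (l - 1)) / xv r l := by
  have h : xv r (l + r - 1) = xv r (l - 1) := xv_congr (by simp)
  simp [Xgcv, h, add_div]

lemma Xgcv_eq_mul_sum (l : ℤ) (n : ℕ) :
    Xgcv r l n = xv r (l - 1) * (xv r (l + n) *
      ∑ k ∈ Finset.range (n + 1), 1 / (xv r (l + k - 1) * xv r (l + k))) := by
  have hl := xv_ne_zero (r := r) l
  have hl' := xv_ne_zero (r := r) (l - 1)
  cases n with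
  | zero =>
    simp only [Xgcv, Nat.cast_zero, add_zero, zero_add, Finset.sum_range_one]
    field_simp
  | succ n =>
    have hn := xv_ne_zero (r := r) (l + n + 1)
    have hper : xv r (l + r - 1) = xv r (l - 1) := xv_congr (by simp)
    have hlast : l + ((n + 1 : ℕ) : ℤ) - 1 = l + n := by lia
    rw [Finset.sum_range_succ, Finset.range_eq_Ico,
      Finset.sum_eq_sum_Ico_succ_bot n.add_one_pos, zero_add, hlast]
    simp only [Xgcv, ← Finset.Ico_add_one_right_eq_Icc, hper,
      div_eq_mul_one_div (_ * _), ← Finset.mul_sum]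
    push_cast
    rw [add_zero, ← add_assoc]
    field_simp

lemma Xgcv_add_two (l : ℤ) (n : ℕ) :
    Xgcv r l (n + 2) = Xgcv r l (n + 1) * Xgcv r (l + n + 1) 1 - Xgcv r l n := by
  have hrec := mul_sum_inv_recurrence (x := fun k : ℕ => xv r (l + k - 1))
    (fun _ => xv_ne_zero _) (n + 1)
  have hshift (k : ℕ) : l + ((k + 1 : ℕ) : ℤ) - 1 = l + k := by lia
  have hsucc : l + ((n + 1 : ℕ) : ℤ) = l + n + 1 := by lia
  have hsucc' : l + ((n + 2 : ℕ) : ℤ) = l + n + 1 + 1 := by lia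
  simp only [hshift, hsucc, hsucc', add_sub_cancel_right] at hrec
  rw [Xgcv_one]
  simp only [Xgcv_eq_mul_sum, add_sub_cancel_right, hsucc, hsucc', hrec]
  ring

lemma dimVec_zero (l : ℤ) : dimVec r l 0 = 0 := by
  ext v
  simp [dimVec]

lemma dimVec_succ (l : ℤ) (n : ℕ) :
    dimVec r l (n + 1) = dimVec r l n + Pi.single ((l + n : ℤ) : ZMod r) 1 := by
  ext v
  by_cases h : (l : ZMod r) + n = v <;>
    simp [dimVec, Finset.range_add_one, Finset.filter_insert, h, eq_comm (a := v)]

lemma dimVec_one (l : ℤ) : dimVec r l 1 = Pi.single (l : ZMod r) 1 := by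
  simp [dimVec_succ, dimVec_zero]

lemma dimVec_strictMono (l : ℤ) : StrictMono (dimVec r l) :=
  strictMono_nat_of_lt_succ fun n => by
    rw [dimVec_succ]
    exact lt_add_of_pos_right _ (by simp)

lemma dimMul_eq_sum (S : Multiset (ℤ × ℕ)) :
    dimMul r S = (S.map fun p => dimVec r p.1 p.2).sum := by
  ext v
  simp [dimMul, Pi.multiset_sum_apply]

end ClusterVariable

section Semisimple

variable {r : ℕ} [NeZero r]

/-- The representative in `{1, …, r}` of a vertex `v` of the cyclic quiver. -/
def vertexRep (v : ZMod r) : ℤ := (v - 1).val + 1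

lemma vertexRep_cast (v : ZMod r) : (vertexRep v : ZMod r) = v := by
  simp [vertexRep]

lemma vertexRep_mem_Icc (v : ZMod r) : vertexRep v ∈ Set.Icc 1 (r : ℤ) := by
  have := ZMod.val_lt (v - 1)
  simp only [vertexRep, Set.mem_Icc]
  lia

variable (r) in
/-- The monomials in the variables `X(v, 1)` of the simple modules, which are the variables of
the semisimple modules. -/
noncomputable def simpleMonomial : Multiplicative (ZMod r → ℕ) →* CyclicField r :=
  monomialHom fun v => Xgcv r (vertexRep v) 1

/-- The multiset of pairs describing the semisimple module of dimension vector `e`. -/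
def semisimple (e : ZMod r → ℕ) : Multiset (ℤ × ℕ) :=
  ∑ v, e v • {(vertexRep v, 1)}

lemma admissible_semisimple (e : ZMod r → ℕ) : Admissible r (semisimple e) := by
  intro p hp
  obtain ⟨v, -, hv⟩ := Multiset.mem_sum.1 hp
  obtain rfl := Multiset.mem_singleton.1 (Multiset.mem_of_mem_nsmul hv)
  exact ⟨(vertexRep_mem_Icc v).1, (vertexRep_mem_Icc v).2, le_rfl⟩

lemma map_semisimple {β : Type*} (g : ℤ × ℕ → β) (e : ZMod r → ℕ) :
    (semisimple e).map g = ∑ v, e v • {g (vertexRep v, 1)} := by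
  simp only [semisimple, ← Multiset.coe_mapAddMonoidHom, map_sum, map_nsmul]
  simp only [Multiset.coe_mapAddMonoidHom, Multiset.map_singleton]

lemma XMul_semisimple (e : ZMod r → ℕ) :
    XMul r (semisimple e) = simpleMonomial r (.ofAdd e) := by
  simp [XMul, map_semisimple, simpleMonomial, monomialHom_ofAdd, Multiset.prod_sum,
    Multiset.prod_nsmul]

lemma dimMul_semisimple (e : ZMod r → ℕ) : dimMul r (semisimple e) = e := by
  ext v
  simp [dimMul, map_semisimple, Multiset.sum_sum, Multiset.sum_nsmul, dimVec_one,
    vertexRep_cast, Pi.single_apply]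

lemma exists_sum_XMul_of_mem_spanLT {d : ZMod r → ℕ} {b : CyclicField r}
    (hb : b ∈ spanLT (simpleMonomial r) d) :
    ∃ (N : ℕ) (R : Fin N → Multiset (ℤ × ℕ)) (a : Fin N → ℤ),
      (∀ t, Admissible r (R t)) ∧ (∀ t, DimLT r (dimMul r (R t)) d) ∧
      b = ∑ t, a t • XMul r (R t) := by
  obtain ⟨N, a, g, rfl⟩ := Submodule.mem_span_set'.1 hb
  choose e he hge using fun t => (g t).2
  refine ⟨N, fun t => semisimple (e t), a, fun t => admissible_semisimple _, fun t => ?_, ?_⟩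
  · rw [dimMul_semisimple]
    have hlt : e t < d := he t
    exact ⟨hlt.le, hlt.ne⟩
  · exact Finset.sum_congr rfl fun t _ => by rw [XMul_semisimple, ← hge t]

lemma hasLeadingTerm_Xgcv_one (l : ℤ) :
    HasLeadingTerm (simpleMonomial r) (dimVec r l 1) (Xgcv r l 1) := by
  have h : simpleMonomial r (.ofAdd (dimVec r l 1)) = Xgcv r l 1 := by
    rw [dimVec_one, simpleMonomial, monomialHom_single]
    exact Xgcv_congr (vertexRep_cast _) 1
  exact h ▸ .map_ofAdd

lemma hasLeadingTerm_Xgcv (l : ℤ) (n : ℕ) :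
    HasLeadingTerm (simpleMonomial r) (dimVec r l n) (Xgcv r l n) := by
  induction n using Nat.twoStepInduction with
  | zero => simpa [dimVec_zero, Xgcv] using HasLeadingTerm.one
  | one => exact hasLeadingTerm_Xgcv_one l
  | more n hn hn1 =>
    have hdim : dimVec r l (n + 2) = dimVec r l (n + 1) + dimVec r (l + n + 1) 1 := by
      rw [dimVec_succ, dimVec_one]
      simp [add_assoc]
    have hprod : HasLeadingTerm (simpleMonomial r) (dimVec r l (n + 2))
        (Xgcv r l (n + 1) * Xgcv r (l + n + 1) 1) :=
      hdim ▸ hn1.mul (hasLeadingTerm_Xgcv_one _)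
    have hlt : dimVec r l n < dimVec r l (n + 2) := dimVec_strictMono l (by lia)
    rw [Xgcv_add_two]
    exact hprod.sub (spanLE_le_spanLT hlt hn.mem_spanLE)

lemma hasLeadingTerm_XMul (S : Multiset (ℤ × ℕ)) :
    HasLeadingTerm (simpleMonomial r) (dimMul r S) (XMul r S) := by
  rw [dimMul_eq_sum, XMul]
  have hX (p : ℤ × ℕ) (_ : p ∈ S) :
      HasLeadingTerm (simpleMonomial r) (dimVec r p.1 p.2) (Xgcv r p.1 p.2) :=
    hasLeadingTerm_Xgcv p.1 p.2
  exact .multiset_prod hX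

end Semisimple

/-- if two admissible multisets `S`, `T` have the same dimension vector, then
`X_S = X_T + Σ_t a_t · X_{R_t}` for finitely many admissible multisets `R_t` whose dimension
vectors are strictly smaller than that of `T`, and integers `a_t`. -/
theorem stmt13 (r : ℕ) (hr : 1 ≤ r) (S T : Multiset (ℤ × ℕ))
    (hS : Admissible r S) (hT : Admissible r T) (hd : dimMul r S = dimMul r T) :
    ∃ (N : ℕ) (R : Fin N → Multiset (ℤ × ℕ)) (a : Fin N → ℤ),
      (∀ t, Admissible r (R t)) ∧
      (∀ t, DimLT r (dimMul r (R t)) (dimMul r T)) ∧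
      XMul r S = XMul r T + ∑ t, a t • XMul r (R t) := by
  have : NeZero r := ⟨by lia⟩
  have hmem : XMul r S - XMul r T ∈ spanLT (simpleMonomial r) (dimMul r T) :=
    (hd ▸ hasLeadingTerm_XMul S).sub_mem_spanLT (hasLeadingTerm_XMul T)
  obtain ⟨N, R, a, hR, hlt, hsum⟩ := exists_sum_XMul_of_mem_spanLT hmem
  exact ⟨N, R, a, hR, hlt, by rw [← hsum, add_sub_cancel]⟩
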